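/- For every HyperLTL_temp formula ψ, every weighted Kripke structure K, and every lasso assignment Π (a trace assignment mapping each free variable of ψ to a lasso of K, i.e. Π(π) ∈ 𝕃(K) for all free variables π of ψ), the satisfaction value of ψ over the full trace set equals its satisfaction value over the lasso set: ⟦ψ⟧_Π^{𝕋(K)} = ⟦ψ⟧_Π^{𝕃(K)}. In particular, for every closed HyperLTL_temp formula ψ, ⟦ψ⟧^{𝕋(K)} = ⟦ψ⟧^{𝕃(K)}. -/

import Mathlib

open Set

noncomputable section

/-- A (weighted) trace assigns to each time step and atomic proposition a weight in `[0,1]`. -/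
abbrev Trace (AP : Type) : Type := ℕ → AP → unitInterval

/-- Boolean traces: all weights are `0` or `1`. -/
def IsBoolTrace {AP : Type} (t : Trace AP) : Prop :=
  ∀ i p, (t i p : ℝ) = 0 ∨ (t i p : ℝ) = 1

/-- Lassos: eventually periodic traces, i.e. traces of the form `u·v^ω`. -/
def IsLasso {AP : Type} (t : Trace AP) : Prop :=
  ∃ N c : ℕ, 0 < c ∧ ∀ n, N ≤ n → t (n + c) = t n

/-- Shifting a trace assignment: `Π[i,∞]`. -/
def shiftA {AP Var : Type} (ρ : Var → Trace AP) (i : ℕ) : Var → Trace AP :=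
  fun π n => ρ π (n + i)

/-- `prefMin g i = min_{0 ≤ j < i} g j` (with the empty minimum being `1`). -/
def prefMin (g : ℕ → ℝ) : ℕ → ℝ
  | 0 => 1
  | n + 1 => min (prefMin g n) (g n)

/-- A discounting sequence: strictly decreasing, with values in `[0,1]` and limit `0`. -/
def IsDiscounting (η : ℕ → ℝ) : Prop :=
  StrictAnti η ∧ (∀ i, η i ∈ Set.Icc (0:ℝ) 1) ∧
    Filter.Tendsto η Filter.atTop (nhds 0)

/-- Quantifier-free HyperLTL_temp formulas, over a set `D` (indexing the discounting
sequences). -/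
inductive TQF (AP Var D : Type) : Type where
  | atom : AP → Var → TQF AP Var D
  | neg : TQF AP Var D → TQF AP Var D
  | or : TQF AP Var D → TQF AP Var D → TQF AP Var D
  | next : TQF AP Var D → TQF AP Var D
  | untl : TQF AP Var D → TQF AP Var D → TQF AP Var D
  | untlD : D → TQF AP Var D → TQF AP Var D → TQF AP Var D

/-- HyperLTL_temp formulas: a prefix of quantifiers over a quantifier-free formula. -/
inductive TForm (AP Var D : Type) : Type where
  | qf : TQF AP Var D → TForm AP Var D
  | ex : Var → TForm AP Var D → TForm AP Var D
  | all : Var → TForm AP Var D → TForm AP Var D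

variable {AP Var D : Type}

/-- Satisfaction value of quantifier-free HyperLTL_temp formulas, where `η` interprets the
discounting sequence indices. -/
def tsemQF (η : D → ℕ → ℝ) : TQF AP Var D → (Var → Trace AP) → Set (Trace AP) → ℝ
  | .atom p π, ρ, _ => (ρ π 0 p : ℝ)
  | .neg φ, ρ, T => 1 - tsemQF η φ ρ T
  | .or φ₁ φ₂, ρ, T => max (tsemQF η φ₁ ρ T) (tsemQF η φ₂ ρ T)
  | .next φ, ρ, T => tsemQF η φ (shiftA ρ 1) T
  | .untl φ₁ φ₂, ρ, T =>
      ⨆ i : ℕ, min (tsemQF η φ₂ (shiftA ρ i) T)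
        (prefMin (fun j => tsemQF η φ₁ (shiftA ρ j) T) i)
  | .untlD d φ₁ φ₂, ρ, T =>
      ⨆ i : ℕ, min (η d i * tsemQF η φ₂ (shiftA ρ i) T)
        (prefMin (fun j => η d j * tsemQF η φ₁ (shiftA ρ j) T) i)

/-- Satisfaction value `⟦ψ⟧_Π^T` of HyperLTL_temp formulas. -/
def tsem [DecidableEq Var] (η : D → ℕ → ℝ) :
    TForm AP Var D → (Var → Trace AP) → Set (Trace AP) → ℝ
  | .qf φ, ρ, T => tsemQF η φ ρ T
  | .ex π ψ, ρ, T => sSup ((fun t => tsem η ψ (Function.update ρ π t) T) '' T)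
  | .all π ψ, ρ, T => sInf ((fun t => tsem η ψ (Function.update ρ π t) T) '' T)

/-- The variables occurring in a quantifier-free formula. -/
def varsTQF : TQF AP Var D → Set Var
  | .atom _ π => {π}
  | .neg φ => varsTQF φ
  | .or φ₁ φ₂ => varsTQF φ₁ ∪ varsTQF φ₂
  | .next φ => varsTQF φ
  | .untl φ₁ φ₂ => varsTQF φ₁ ∪ varsTQF φ₂
  | .untlD _ φ₁ φ₂ => varsTQF φ₁ ∪ varsTQF φ₂

/-- The free variables of a HyperLTL_temp formula. -/
def freeVars : TForm AP Var D → Set Var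
  | .qf φ => varsTQF φ
  | .ex π ψ => freeVars ψ \ {π}
  | .all π ψ => freeVars ψ \ {π}

/-- A weighted Kripke structure over `AP`: a finite state set, a finite weight set
`W ⊆ [0,1]`, initial states, a total transition relation, and a weighted labeling. -/
structure Kripke (AP : Type) where
  S : Type
  [finS : Fintype S]
  W : Set ℝ
  Wfin : W.Finite
  Wsub : W ⊆ Set.Icc (0:ℝ) 1
  init : Set S
  tr : S → S → Prop
  total : ∀ s, ∃ s', tr s s'
  L : S → AP → unitInterval
  L_mem : ∀ s p, ((L s p : ℝ)) ∈ W

/-- The set `𝕋(K)` of traces of a Kripke structure. -/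
def Kripke.Traces {AP : Type} (K : Kripke AP) : Set (Trace AP) :=
  {t | ∃ s : ℕ → K.S, s 0 ∈ K.init ∧ (∀ i, K.tr (s i) (s (i + 1))) ∧
        ∀ i p, t i p = K.L (s i) p}

/-- The set `𝕃(K)` of lassos of a Kripke structure. -/
def Kripke.Lassos {AP : Type} (K : Kripke AP) : Set (Trace AP) :=
  {t | t ∈ K.Traces ∧ IsLasso t}

/-- A nondeterministic Büchi automaton over the alphabet `Alph`. -/
structure NBA (Alph : Type) where
  Q : Type
  [finQ : Fintype Q]
  init : Set Q
  δ : Q → Alph → Set Q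
  acc : Set Q

/-- Büchi acceptance: some run visits the accepting set infinitely often. -/
def NBA.Accepts {Alph : Type} (A : NBA Alph) (w : ℕ → Alph) : Prop :=
  ∃ r : ℕ → A.Q, r 0 ∈ A.init ∧ (∀ i, r (i + 1) ∈ A.δ (r i) (w i)) ∧
    ∀ N, ∃ n, N ≤ n ∧ r n ∈ A.acc

/-- The encoding `t_Π` of a trace assignment `[π₁ ↦ t₁, …, π_k ↦ t_k]` as a single trace
over the atomic propositions `AP_{≤k}`, identified with `AP × Fin k`. -/
def encode {AP : Type} {k : ℕ} (ts : Fin k → Trace AP) : Trace (AP × Fin k) :=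
  fun n q => ts q.2 n q.1

/-! ### Approximate recognition of real-valued functions on trace assignments -/

theorem shiftA_zero (ρ : Var → Trace AP) : shiftA ρ 0 = ρ := rfl

theorem shiftA_shiftA (ρ : Var → Trace AP) (i j : ℕ) :
    shiftA (shiftA ρ i) j = shiftA ρ (i + j) := by
  funext π n
  simp only [shiftA]
  congr 1
  omega

/-- `τ ρ ℓ` is a function of the first `ℓ` letters of the assignment `ρ` only. -/
def IsLocal {Q : Type} (τ : (Var → Trace AP) → ℕ → Q) : Prop :=
  ∀ ρ σ ℓ, (∀ π, ∀ i < ℓ, ρ π i = σ π i) → τ ρ ℓ = τ σ ℓ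

/-- The `k`-th blocks of `ρ` and `ρ'`, cut at `n` and `n'` respectively, have the same type for
every `k`. -/
def SameBlocks {Q : Type} (τ : (Var → Trace AP) → ℕ → Q) (ρ : Var → Trace AP) (n : ℕ → ℕ)
    (σ : Var → Trace AP) (m : ℕ → ℕ) : Prop :=
  ∀ k, τ (shiftA ρ (n k)) (n (k + 1) - n k) = τ (shiftA σ (m k)) (m (k + 1) - m k)

/-- Assignments that factor into blocks of the same types have `f`-values within `ε`. The relation
is symmetric in the two assignments, so one inequality suffices. -/
def Recognizes {Q : Type} (τ : (Var → Trace AP) → ℕ → Q) (ε : ℝ)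
    (f : (Var → Trace AP) → ℝ) : Prop :=
  ∀ ρ σ n m, StrictMono n → StrictMono m → n 0 = 0 → m 0 = 0 →
    SameBlocks τ ρ n σ m → f ρ ≤ f σ + ε

/-- `f` is, up to any positive error, recognized by a local block typing with finitely many
types. -/
def ApproxRegular (f : (Var → Trace AP) → ℝ) : Prop :=
  ∀ ε > 0, ∃ (Q : Type) (_ : Finite Q) (τ : (Var → Trace AP) → ℕ → Q),
    IsLocal τ ∧ Recognizes τ ε f

theorem SameBlocks.symm {Q : Type} {τ : (Var → Trace AP) → ℕ → Q} {ρ ρ' : Var → Trace AP}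
    {n n' : ℕ → ℕ} (h : SameBlocks τ ρ n ρ' n') : SameBlocks τ ρ' n' ρ n :=
  fun k => (h k).symm

theorem SameBlocks.map {Q R : Type} {τ : (Var → Trace AP) → ℕ → Q} {ρ ρ' : Var → Trace AP}
    {n n' : ℕ → ℕ} (h : SameBlocks τ ρ n ρ' n') (g : Q → R) :
    SameBlocks (fun ρ ℓ => g (τ ρ ℓ)) ρ n ρ' n' :=
  fun k => congrArg g (h k)

theorem IsLocal.shift {Q : Type} {τ : (Var → Trace AP) → ℕ → Q} (h : IsLocal τ)
    {ρ ρ' : Var → Trace AP} {ℓ : ℕ} (hρ : ∀ π, ∀ i < ℓ, ρ π i = ρ' π i) (j : ℕ) :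
    τ (shiftA ρ j) (ℓ - j) = τ (shiftA ρ' j) (ℓ - j) :=
  h _ _ _ fun π i hi => hρ π (i + j) (by omega)

/-- Recognition for cut sequences that need not start at `0`. -/
theorem Recognizes.of_cuts {Q : Type} {τ : (Var → Trace AP) → ℕ → Q} {ε : ℝ}
    {f : (Var → Trace AP) → ℝ} (h : Recognizes τ ε f) {ρ ρ' : Var → Trace AP} {n n' : ℕ → ℕ}
    (hn : StrictMono n) (hn' : StrictMono n') (hb : SameBlocks τ ρ n ρ' n') :
    f (shiftA ρ (n 0)) ≤ f (shiftA ρ' (n' 0)) + ε := by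
  have mono : ∀ {m : ℕ → ℕ}, StrictMono m → ∀ k, m 0 ≤ m k :=
    fun hm k => hm.monotone (Nat.zero_le k)
  refine h _ _ (fun k => n k - n 0) (fun k => n' k - n' 0) ?_ ?_ (by simp) (by simp) ?_
  · intro a b hab
    have := hn hab
    have := mono hn a
    simp only
    omega
  · intro a b hab
    have := hn' hab
    have := mono hn' a
    simp only
    omega
  · intro k
    have h1 := mono hn k
    have h2 := mono hn (k + 1)
    have h3 := mono hn' k
    have h4 := mono hn' (k + 1)
    have e1 : n 0 + (n k - n 0) = n k := by omega
    have e2 : n' 0 + (n' k - n' 0) = n' k := by omega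
    have e3 : n (k + 1) - n 0 - (n k - n 0) = n (k + 1) - n k := by omega
    have e4 : n' (k + 1) - n' 0 - (n' k - n' 0) = n' (k + 1) - n' k := by omega
    simp only [shiftA_shiftA, e1, e2, e3, e4]
    exact hb k

/-- Recognition for suffixes that start inside the `k`-th blocks. -/
theorem Recognizes.of_inner {Q : Type} {τ : (Var → Trace AP) → ℕ → Q} {ε : ℝ}
    {f : (Var → Trace AP) → ℝ} (h : Recognizes τ ε f) {ρ ρ' : Var → Trace AP} {n n' : ℕ → ℕ}
    (hn : StrictMono n) (hn' : StrictMono n') (hb : SameBlocks τ ρ n ρ' n') {k i i' : ℕ}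
    (hi : i < n (k + 1)) (hi' : i' < n' (k + 1))
    (ht : τ (shiftA ρ i) (n (k + 1) - i) = τ (shiftA ρ' i') (n' (k + 1) - i')) :
    f (shiftA ρ i) ≤ f (shiftA ρ' i') + ε := by
  have mono : ∀ {m : ℕ → ℕ} {a : ℕ}, StrictMono m → a < m (k + 1) →
      StrictMono (fun j => Nat.casesOn j a fun j => m (k + 1 + j) : ℕ → ℕ) := by
    intro m a hm ha
    refine strictMono_nat_of_lt_succ fun j => ?_
    cases j with
    | zero => exact ha
    | succ j => exact hm (by omega)
  refine h.of_cuts (mono hn hi) (mono hn' hi') fun j => ?_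
  cases j with
  | zero => exact ht
  | succ j => exact hb (k + 1 + j)

/-- Every position lies in some block. -/
theorem exists_block {n : ℕ → ℕ} (hn : StrictMono n) (h0 : n 0 = 0) (p : ℕ) :
    ∃ k, n k ≤ p ∧ p < n (k + 1) := by
  induction p with
  | zero => exact ⟨0, h0.le, h0.symm.trans_lt (hn (Nat.lt_succ_self 0))⟩
  | succ p ih =>
    obtain ⟨k, hk, hk'⟩ := ih
    by_cases h : p + 1 < n (k + 1)
    · exact ⟨k, by omega, h⟩
    · have := hn (Nat.lt_succ_self (k + 1))
      exact ⟨k + 1, by omega, by simp only [Nat.succ_eq_add_one] at this; omega⟩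

/-- Sequences of finite words that overlap in their end points can be glued along cut points. -/
theorem exists_glue {α : Type} {n : ℕ → ℕ} (hn : StrictMono n) (h0 : n 0 = 0) (g : ℕ → ℕ → α)
    (hg : ∀ k, g k (n (k + 1) - n k) = g (k + 1) 0) :
    ∃ s : ℕ → α, ∀ k j, j ≤ n (k + 1) - n k → s (n k + j) = g k j := by
  choose b hb hb' using exists_block hn h0
  have key : ∀ k j, j < n (k + 1) - n k → g (b (n k + j)) (n k + j - n (b (n k + j))) = g k j := by
    intro k j hj
    have h1 := hb (n k + j)
    have h2 := hb' (n k + j)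
    have hk : b (n k + j) = k := by
      rcases lt_trichotomy (b (n k + j)) k with h | h | h
      · have := hn.monotone (Nat.succ_le_of_lt h)
        simp only [Nat.succ_eq_add_one] at this
        omega
      · exact h
      · have := hn.monotone (Nat.succ_le_of_lt h)
        simp only [Nat.succ_eq_add_one] at this
        omega
    rw [hk, Nat.add_sub_cancel_left]
  refine ⟨fun p => g (b p) (p - n (b p)), fun k j hj => ?_⟩
  rcases hj.lt_or_eq with hj | rfl
  · exact key k j hj
  · have h1 := hn (Nat.lt_succ_self k)
    have h2 := hn (Nat.lt_succ_self (k + 1))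
    simp only [Nat.succ_eq_add_one] at h1 h2
    have := key (k + 1) 0 (by omega)
    rw [Nat.add_zero] at this
    rw [hg, ← this, Nat.add_sub_of_le h1.le]

/-! ### Closure properties -/

theorem ApproxRegular.const (c : ℝ) : ApproxRegular (fun _ : Var → Trace AP => c) :=
  fun ε hε => ⟨Unit, inferInstance, fun _ _ => (), fun _ _ _ _ => rfl,
    fun _ _ _ _ _ _ _ _ _ => by linarith⟩

theorem approxRegular_atom (p : AP) (π : Var) :
    ApproxRegular (fun ρ : Var → Trace AP => (ρ π 0 p : ℝ)) := by
  intro ε hε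
  refine ⟨Fin (⌊1 / ε⌋₊ + 1), inferInstance,
    fun ρ ℓ => if ℓ = 0 then 0 else ⟨⌊(ρ π 0 p : ℝ) / ε⌋₊, Nat.lt_succ_of_le
      (Nat.floor_mono (div_le_div_of_nonneg_right (ρ π 0 p).2.2 hε.le))⟩, ?_, ?_⟩
  · intro ρ ρ' ℓ h
    rcases Nat.eq_zero_or_pos ℓ with h0 | h0
    · simp [h0]
    · simp only [h π 0 h0]
  · intro ρ ρ' n n' hn hn' h0 h0' hb
    have h1 := hn (Nat.lt_succ_self 0)
    have h1' := hn' (Nat.lt_succ_self 0)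
    have := hb 0
    simp only [Nat.succ_eq_add_one, h0, h0', zero_add, Nat.sub_zero, shiftA_zero] at this h1 h1'
    rw [if_neg h1.ne', if_neg h1'.ne', Fin.mk.injEq] at this
    have ha : (ρ π 0 p : ℝ) / ε < ⌊(ρ π 0 p : ℝ) / ε⌋₊ + 1 := Nat.lt_floor_add_one _
    have hb : (⌊(ρ' π 0 p : ℝ) / ε⌋₊ : ℝ) ≤ (ρ' π 0 p : ℝ) / ε :=
      Nat.floor_le (div_nonneg (ρ' π 0 p).2.1 hε.le)
    rw [this] at ha
    have hc : (ρ π 0 p : ℝ) / ε < (ρ' π 0 p : ℝ) / ε + 1 := by linarith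
    rw [div_add_one hε.ne', div_lt_div_iff_of_pos_right hε] at hc
    exact hc.le

theorem ApproxRegular.one_sub {f : (Var → Trace AP) → ℝ} (hf : ApproxRegular f) :
    ApproxRegular (fun ρ => 1 - f ρ) := by
  intro ε hε
  obtain ⟨Q, hQ, τ, hl, hr⟩ := hf ε hε
  refine ⟨Q, hQ, τ, hl, fun ρ ρ' n n' hn hn' h0 h0' hb => ?_⟩
  have := hr ρ' ρ n' n hn' hn h0' h0 hb.symm
  linarith

/-- Finitely many approximately regular functions have a common block typing. -/
theorem exists_common_typing {ι : Type} [Finite ι] {f : ι → (Var → Trace AP) → ℝ}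
    (hf : ∀ i, ApproxRegular (f i)) {ε : ℝ} (hε : 0 < ε) :
    ∃ (Q : Type) (_ : Finite Q) (τ : (Var → Trace AP) → ℕ → Q),
      IsLocal τ ∧ ∀ i, Recognizes τ ε (f i) := by
  choose Q hQ τ hl hr using fun i => hf i ε hε
  refine ⟨∀ i, Q i, inferInstance, fun ρ ℓ i => τ i ρ ℓ,
    fun ρ ρ' ℓ h => funext fun i => hl i ρ ρ' ℓ h, fun i ρ ρ' n n' hn hn' h0 h0' hb => ?_⟩
  exact hr i ρ ρ' n n' hn hn' h0 h0' (hb.map fun q => q i)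

theorem exists_common_typing_pair {f g : (Var → Trace AP) → ℝ}
    (hf : ApproxRegular f) (hg : ApproxRegular g) {ε : ℝ} (hε : 0 < ε) :
    ∃ (Q : Type) (_ : Finite Q) (τ : (Var → Trace AP) → ℕ → Q),
      IsLocal τ ∧ Recognizes τ ε f ∧ Recognizes τ ε g := by
  obtain ⟨Q, hQ, τ, hl, hr⟩ :=
    exists_common_typing (f := fun b : Bool => cond b f g) (by rintro (_ | _) <;> assumption) hε
  exact ⟨Q, hQ, τ, hl, hr true, hr false⟩

theorem ApproxRegular.max {f g : (Var → Trace AP) → ℝ} (hf : ApproxRegular f)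
    (hg : ApproxRegular g) : ApproxRegular (fun ρ => max (f ρ) (g ρ)) := by
  intro ε hε
  obtain ⟨Q, hQ, τ, hl, h1, h2⟩ := exists_common_typing_pair hf hg hε
  refine ⟨Q, hQ, τ, hl, fun ρ ρ' n n' hn hn' h0 h0' hb => ?_⟩
  rw [← max_add_add_right]
  exact max_le_max (h1 ρ ρ' n n' hn hn' h0 h0' hb) (h2 ρ ρ' n n' hn hn' h0 h0' hb)

theorem ApproxRegular.min {f g : (Var → Trace AP) → ℝ} (hf : ApproxRegular f)
    (hg : ApproxRegular g) : ApproxRegular (fun ρ => min (f ρ) (g ρ)) := by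
  intro ε hε
  obtain ⟨Q, hQ, τ, hl, h1, h2⟩ := exists_common_typing_pair hf hg hε
  refine ⟨Q, hQ, τ, hl, fun ρ ρ' n n' hn hn' h0 h0' hb => ?_⟩
  rw [← min_add_add_right]
  exact min_le_min (h1 ρ ρ' n n' hn hn' h0 h0' hb) (h2 ρ ρ' n n' hn hn' h0 h0' hb)

theorem ApproxRegular.const_mul {f : (Var → Trace AP) → ℝ} (hf : ApproxRegular f) {c : ℝ}
    (hc : c ∈ Set.Icc (0 : ℝ) 1) : ApproxRegular (fun ρ => c * f ρ) := by
  intro ε hε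
  obtain ⟨Q, hQ, τ, hl, hr⟩ := hf ε hε
  refine ⟨Q, hQ, τ, hl, fun ρ ρ' n n' hn hn' h0 h0' hb => ?_⟩
  have := mul_le_mul_of_nonneg_left (hr ρ ρ' n n' hn hn' h0 h0' hb) hc.1
  have := mul_le_mul_of_nonneg_right hc.2 hε.le
  linarith

theorem ApproxRegular.next {f : (Var → Trace AP) → ℝ} (hf : ApproxRegular f) :
    ApproxRegular (fun ρ => f (shiftA ρ 1)) := by
  intro ε hε
  obtain ⟨Q, hQ, τ, hl, hr⟩ := hf ε hε
  refine ⟨Prop × Q × Q, inferInstance, fun ρ ℓ => (ℓ = 1, τ ρ ℓ, τ (shiftA ρ 1) (ℓ - 1)), ?_, ?_⟩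
  · intro ρ ρ' ℓ h
    simp only [hl ρ ρ' ℓ h, hl.shift h 1]
  · intro ρ ρ' n n' hn hn' h0 h0' hb
    have hbτ : SameBlocks τ ρ n ρ' n' := hb.map fun q => q.2.1
    have h1 := hn (Nat.lt_succ_self 0)
    have h1' := hn' (Nat.lt_succ_self 0)
    have hb0 := hb 0
    simp only [Nat.succ_eq_add_one, h0, h0', zero_add, Nat.sub_zero, shiftA_zero,
      Prod.mk.injEq, eq_iff_iff] at hb0 h1 h1'
    by_cases h : n 1 = 1
    · have := hr.of_cuts (n := fun k => n (k + 1)) (n' := fun k => n' (k + 1))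
        (fun a b hab => hn (by omega)) (fun a b hab => hn' (by omega)) (fun k => hbτ (k + 1))
      simpa only [zero_add, h, hb0.1.1 h] using this
    · have h' : n' 1 ≠ 1 := fun e => h (hb0.1.2 e)
      exact hr.of_inner hn hn' hbτ (k := 0) (by rw [zero_add]; omega) (by rw [zero_add]; omega)
        hb0.2.2

theorem ApproxRegular.shift {f : (Var → Trace AP) → ℝ} (hf : ApproxRegular f) (i : ℕ) :
    ApproxRegular (fun ρ => f (shiftA ρ i)) := by
  induction i with
  | zero => exact hf
  | succ i ih =>
    have := ih.next
    simp only [shiftA_shiftA] at this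
    rwa [add_comm] at this

theorem le_prefMin_iff {g : ℕ → ℝ} {a : ℝ} {i : ℕ} :
    a ≤ prefMin g i ↔ a ≤ 1 ∧ ∀ j < i, a ≤ g j := by
  induction i with
  | zero => simp [prefMin]
  | succ i ih =>
    rw [prefMin, le_min_iff, ih]
    constructor
    · rintro ⟨⟨h1, h2⟩, h3⟩
      refine ⟨h1, fun j hj => ?_⟩
      rcases Nat.lt_succ_iff_lt_or_eq.1 hj with hj | rfl
      · exact h2 j hj
      · exact h3
    · rintro ⟨h1, h2⟩
      exact ⟨⟨h1, fun j hj => h2 j (by omega)⟩, h2 i (by omega)⟩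

theorem ApproxRegular.prefMin {g : ℕ → (Var → Trace AP) → ℝ} (hg : ∀ j, ApproxRegular (g j))
    (i : ℕ) : ApproxRegular (fun ρ => prefMin (fun j => g j ρ) i) := by
  induction i with
  | zero => exact .const 1
  | succ i ih => exact ih.min (hg i)

/-- The typing used for until: the type of the block, the types of all its suffixes, and for every
position the type of the suffix there together with the types of all earlier suffixes. -/
def untlTyping {Q : Type} (τ : (Var → Trace AP) → ℕ → Q) (ρ : Var → Trace AP) (ℓ : ℕ) :
    Q × Set Q × Set (Q × Set Q) :=
  (τ ρ ℓ, {q | ∃ j < ℓ, τ (shiftA ρ j) (ℓ - j) = q},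
    {x | ∃ i < ℓ, (τ (shiftA ρ i) (ℓ - i), {q | ∃ j < i, τ (shiftA ρ j) (ℓ - j) = q}) = x})

theorem ApproxRegular.untl {f g : (Var → Trace AP) → ℝ} (hf : ApproxRegular f)
    (hg : ApproxRegular g) (hg1 : ∀ ρ, g ρ ≤ 1) :
    ApproxRegular (fun ρ => ⨆ i : ℕ, Min.min (g (shiftA ρ i))
      (_root_.prefMin (fun j => f (shiftA ρ j)) i)) := by
  intro ε hε
  obtain ⟨Q, hQ, τ, hl, hrf, hrg⟩ := exists_common_typing_pair hf hg hε
  refine ⟨_, inferInstance, untlTyping τ, ?_, ?_⟩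
  · intro ρ ρ' ℓ h
    simp only [untlTyping, hl ρ ρ' ℓ h, hl.shift h]
  intro ρ ρ' n n' hn hn' h0 h0' hb
  have hbτ : SameBlocks τ ρ n ρ' n' := hb.map fun q => q.1
  refine ciSup_le fun i => ?_
  obtain ⟨k, hk, hk'⟩ := exists_block hn h0 i
  have hpos : (τ (shiftA (shiftA ρ (n k)) (i - n k)) (n (k + 1) - n k - (i - n k)),
      {q | ∃ j < i - n k, τ (shiftA (shiftA ρ (n k)) j) (n (k + 1) - n k - j) = q}) ∈
      (untlTyping τ (shiftA ρ (n k)) (n (k + 1) - n k)).2.2 := ⟨i - n k, by omega, rfl⟩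
  rw [hb k] at hpos
  obtain ⟨o, ho, hpos⟩ := hpos
  rw [Prod.mk.injEq] at hpos
  obtain ⟨hsuf, hpre⟩ := hpos
  simp only [shiftA_shiftA] at hsuf hpre
  refine le_trans ?_ (add_le_add_left (le_ciSup (f := fun i : ℕ => Min.min (g (shiftA ρ' i))
      (_root_.prefMin (fun j => f (shiftA ρ' j)) i)) ⟨1, ?_⟩ (n' k + o)) ε)
  swap
  · rintro _ ⟨i, rfl⟩
    exact (min_le_left _ _).trans (hg1 _)
  rw [← min_add_add_right]
  refine min_le_min ?_ ?_
  · refine hrg.of_inner hn hn' hbτ (k := k) hk' (by omega) ?_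
    convert hsuf.symm using 2
    · congr 1; omega
    · omega
    · omega
  · rw [← sub_le_iff_le_add, le_prefMin_iff]
    obtain ⟨hle1, hle⟩ := le_prefMin_iff.1 (le_refl (_root_.prefMin (fun j => f (shiftA ρ j)) i))
    refine ⟨by linarith, fun j' hj' => ?_⟩
    suffices ∃ j < i, f (shiftA ρ j) ≤ f (shiftA ρ' j') + ε by
      obtain ⟨j, hj, hj2⟩ := this
      have := hle j hj
      linarith
    obtain ⟨m, hm, hm'⟩ := exists_block hn' h0' j'
    have hmk : m ≤ k := by
      by_contra hlt
      have := hn'.monotone (Nat.succ_le_of_lt (not_le.1 hlt))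
      simp only [Nat.succ_eq_add_one] at this
      omega
    rcases hmk.lt_or_eq with hmk | rfl
    · have hmem : τ (shiftA (shiftA ρ' (n' m)) (j' - n' m)) (n' (m + 1) - n' m - (j' - n' m)) ∈
          (untlTyping τ (shiftA ρ' (n' m)) (n' (m + 1) - n' m)).2.1 := ⟨j' - n' m, by omega, rfl⟩
      rw [← hb m] at hmem
      obtain ⟨j, hj, hjt⟩ := hmem
      have := hn.monotone (Nat.succ_le_of_lt hmk)
      simp only [Nat.succ_eq_add_one] at this
      refine ⟨n m + j, by omega, hrf.of_inner hn hn' hbτ (k := m) (by omega) hm' ?_⟩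
      simp only [shiftA_shiftA] at hjt
      convert hjt using 2
      · omega
      · congr 1; omega
      · omega
    · have hmem : τ (shiftA ρ' (n' m + (j' - n' m))) (n' (m + 1) - n' m - (j' - n' m)) ∈
          {q | ∃ j < o, τ (shiftA ρ' (n' m + j)) (n' (m + 1) - n' m - j) = q} :=
        ⟨j' - n' m, by omega, rfl⟩
      rw [hpre] at hmem
      obtain ⟨j, hj, hjt⟩ := hmem
      refine ⟨n m + j, by omega, hrf.of_inner hn hn' hbτ (k := m) (by omega) hm' ?_⟩
      convert hjt using 2
      · omega
      · congr 1; omega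
      · omega

/-- A supremum of approximately regular functions is approximately regular if its terms are bounded
by a sequence with limit zero. -/
theorem ApproxRegular.iSup {h : ℕ → (Var → Trace AP) → ℝ} {η : ℕ → ℝ}
    (hη : Filter.Tendsto η Filter.atTop (nhds 0)) (hh : ∀ i, ApproxRegular (h i))
    (h0 : ∀ i ρ, 0 ≤ h i ρ) (hle : ∀ i ρ, h i ρ ≤ η i) :
    ApproxRegular (fun ρ => ⨆ i, h i ρ) := by
  intro ε hε
  obtain ⟨M, hM⟩ := Filter.eventually_atTop.1 (hη.eventually (gt_mem_nhds hε))
  obtain ⟨Q, hQ, τ, hl, hr⟩ :=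
    exists_common_typing (f := fun (i : Fin M) => h i) (fun i => hh i) hε
  refine ⟨Q, hQ, τ, hl, fun ρ ρ' n n' hn hn' hn0 hn0' hb => ciSup_le fun i => ?_⟩
  by_cases hi : i < M
  · have hbdd : BddAbove (Set.range fun i => h i ρ') := by
      obtain ⟨B, hB⟩ := hη.bddAbove_range
      exact ⟨B, by rintro _ ⟨i, rfl⟩; exact (hle i ρ').trans (hB ⟨i, rfl⟩)⟩
    exact (hr ⟨i, hi⟩ ρ ρ' n n' hn hn' hn0 hn0' hb).trans (add_le_add_left (le_ciSup hbdd i) ε)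
  · have h1 := hM i (not_lt.1 hi)
    have h2 := hle i ρ
    have h3 : 0 ≤ ⨆ i, h i ρ' := Real.iSup_nonneg fun i => h0 i ρ'
    linarith

/-! ### Values of formulas -/

theorem prefMin_nonneg {g : ℕ → ℝ} (hg : ∀ j, 0 ≤ g j) (i : ℕ) : 0 ≤ prefMin g i :=
  le_prefMin_iff.2 ⟨zero_le_one, fun j _ => hg j⟩

theorem iSup_min_mem_Icc {a b : ℕ → ℝ} (ha : ∀ i, a i ∈ Set.Icc (0 : ℝ) 1) (hb : ∀ i, 0 ≤ b i) :
    ⨆ i, min (a i) (b i) ∈ Set.Icc (0 : ℝ) 1 :=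
  ⟨Real.iSup_nonneg fun i => le_min (ha i).1 (hb i),
    ciSup_le fun i => (min_le_left _ _).trans (ha i).2⟩

theorem tsemQF_mem_Icc {η : D → ℕ → ℝ} (hη : ∀ d, IsDiscounting (η d)) (φ : TQF AP Var D)
    (ρ : Var → Trace AP) (T : Set (Trace AP)) : tsemQF η φ ρ T ∈ Set.Icc (0 : ℝ) 1 := by
  induction φ generalizing ρ with
  | atom p π => exact (ρ π 0 p).2
  | neg φ ih =>
    have := ih ρ
    simp only [tsemQF, Set.mem_Icc] at this ⊢
    constructor <;> linarith
  | or φ₁ φ₂ ih₁ ih₂ =>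
    exact ⟨(ih₁ ρ).1.trans (le_max_left _ _), max_le (ih₁ ρ).2 (ih₂ ρ).2⟩
  | next φ ih => exact ih _
  | untl φ₁ φ₂ ih₁ ih₂ =>
    exact iSup_min_mem_Icc (fun i => ih₂ _) (prefMin_nonneg fun j => (ih₁ _).1)
  | untlD d φ₁ φ₂ ih₁ ih₂ =>
    exact iSup_min_mem_Icc (fun i => unitInterval.mul_mem ((hη d).2.1 i) (ih₂ _))
      (prefMin_nonneg fun j => mul_nonneg ((hη d).2.1 j).1 (ih₁ _).1)

theorem tsem_mem_Icc [DecidableEq Var] {η : D → ℕ → ℝ} (hη : ∀ d, IsDiscounting (η d))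
    (ψ : TForm AP Var D) (ρ : Var → Trace AP) (T : Set (Trace AP)) :
    tsem η ψ ρ T ∈ Set.Icc (0 : ℝ) 1 := by
  induction ψ generalizing ρ with
  | qf φ => exact tsemQF_mem_Icc hη φ ρ T
  | ex π ψ ih =>
    refine ⟨Real.sSup_nonneg ?_, Real.sSup_le ?_ zero_le_one⟩
    · rintro _ ⟨t, -, rfl⟩
      exact (ih _).1
    · rintro _ ⟨t, -, rfl⟩
      exact (ih _).2
  | all π ψ ih =>
    refine ⟨Real.sInf_nonneg ?_, ?_⟩
    · rintro _ ⟨t, -, rfl⟩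
      exact (ih _).1
    · rcases T.eq_empty_or_nonempty with rfl | ⟨t, ht⟩
      · simp [tsem]
      · refine (csInf_le ⟨0, ?_⟩ (Set.mem_image_of_mem _ ht)).trans (ih _).2
        rintro _ ⟨t, -, rfl⟩
        exact (ih _).1

/-- The value of a quantifier-free formula depends only on the traces of its variables. -/
theorem tsemQF_congr (η : D → ℕ → ℝ) (φ : TQF AP Var D) {ρ ρ' : Var → Trace AP}
    (h : ∀ π ∈ varsTQF φ, ρ π = ρ' π) (T T' : Set (Trace AP)) :
    tsemQF η φ ρ T = tsemQF η φ ρ' T' := by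
  have shift : ∀ {V : Set Var} {ρ ρ' : Var → Trace AP}, (∀ π ∈ V, ρ π = ρ' π) →
      ∀ i, ∀ π ∈ V, shiftA ρ i π = shiftA ρ' i π := fun h i π hπ =>
    congrArg (fun (t : Trace AP) n => t (n + i)) (h π hπ)
  induction φ generalizing ρ ρ' with
  | atom p π => simp only [tsemQF, h π rfl]
  | neg φ ih => simp only [tsemQF, ih h]
  | or φ₁ φ₂ ih₁ ih₂ =>
    simp only [tsemQF, ih₁ fun π hπ => h π (.inl hπ), ih₂ fun π hπ => h π (.inr hπ)]
  | next φ ih => exact ih (shift h 1)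
  | untl φ₁ φ₂ ih₁ ih₂ =>
    simp only [tsemQF, fun i => ih₁ (shift (fun π hπ => h π (.inl hπ)) i),
      fun i => ih₂ (shift (fun π hπ => h π (.inr hπ)) i)]
  | untlD d φ₁ φ₂ ih₁ ih₂ =>
    simp only [tsemQF, fun i => ih₁ (shift (fun π hπ => h π (.inl hπ)) i),
      fun i => ih₂ (shift (fun π hπ => h π (.inr hπ)) i)]

/-- The value of a formula depends only on the traces of its free variables. -/
theorem tsem_congr [DecidableEq Var] (η : D → ℕ → ℝ) (ψ : TForm AP Var D) {ρ ρ' : Var → Trace AP}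
    (h : ∀ π ∈ freeVars ψ, ρ π = ρ' π) (T : Set (Trace AP)) :
    tsem η ψ ρ T = tsem η ψ ρ' T := by
  have upd : ∀ {V : Set Var} {π : Var} {ρ ρ' : Var → Trace AP}, (∀ x ∈ V \ {π}, ρ x = ρ' x) →
      ∀ t, ∀ x ∈ V, Function.update ρ π t x = Function.update ρ' π t x := by
    intro V π ρ ρ' h t x hx
    by_cases hxπ : x = π
    · subst hxπ; simp
    · simp [hxπ, h x ⟨hx, hxπ⟩]
  induction ψ generalizing ρ ρ' with
  | qf φ => exact tsemQF_congr η φ h T T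
  | ex π ψ ih => simp only [tsem, fun t => ih (upd h t)]
  | all π ψ ih => simp only [tsem, fun t => ih (upd h t)]

theorem finite_varsTQF (φ : TQF AP Var D) : (varsTQF φ).Finite := by
  induction φ with
  | atom p π => exact Set.finite_singleton π
  | neg φ ih => exact ih
  | or φ₁ φ₂ ih₁ ih₂ => exact ih₁.union ih₂
  | next φ ih => exact ih
  | untl φ₁ φ₂ ih₁ ih₂ => exact ih₁.union ih₂
  | untlD d φ₁ φ₂ ih₁ ih₂ => exact ih₁.union ih₂

theorem finite_freeVars (ψ : TForm AP Var D) : (freeVars ψ).Finite := by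
  induction ψ with
  | qf φ => exact finite_varsTQF φ
  | ex π ψ ih => exact ih.sdiff
  | all π ψ ih => exact ih.sdiff

theorem approxRegular_tsemQF {η : D → ℕ → ℝ} (hη : ∀ d, IsDiscounting (η d)) (φ : TQF AP Var D)
    (T : Set (Trace AP)) : ApproxRegular (fun ρ => tsemQF η φ ρ T) := by
  induction φ with
  | atom p π => exact approxRegular_atom p π
  | neg φ ih => exact ih.one_sub
  | or φ₁ φ₂ ih₁ ih₂ => exact ih₁.max ih₂
  | next φ ih => exact ih.next
  | untl φ₁ φ₂ ih₁ ih₂ => exact ih₁.untl ih₂ fun ρ => (tsemQF_mem_Icc hη φ₂ ρ T).2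
  | untlD d φ₁ φ₂ ih₁ ih₂ =>
    refine ApproxRegular.iSup (hη d).2.2 (fun i => ?_) (fun i ρ => ?_) (fun i ρ => ?_)
    · exact ((ih₂.shift i).const_mul ((hη d).2.1 i)).min
        (.prefMin (fun j => (ih₁.shift j).const_mul ((hη d).2.1 j)) i)
    · exact le_min (mul_nonneg ((hη d).2.1 i).1 (tsemQF_mem_Icc hη φ₂ _ T).1)
        (prefMin_nonneg (fun j => mul_nonneg ((hη d).2.1 j).1 (tsemQF_mem_Icc hη φ₁ _ T).1) i)
    · exact (min_le_left _ _).trans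
        (mul_le_of_le_one_right ((hη d).2.1 i).1 (tsemQF_mem_Icc hη φ₂ _ T).2)

/-! ### Quantification over the traces of a Kripke structure -/

theorem shiftA_update [DecidableEq Var] (ρ : Var → Trace AP) (π : Var) (t : Trace AP) (i : ℕ) :
    shiftA (Function.update ρ π t) i = Function.update (shiftA ρ i) π (fun n => t (n + i)) := by
  funext x n
  by_cases h : x = π
  · subst h; simp [shiftA]
  · simp [shiftA, h]

theorem update_apply_congr [DecidableEq Var] {ρ ρ' : Var → Trace AP} {t t' : Trace AP} {ℓ : ℕ}
    (hρ : ∀ π, ∀ i < ℓ, ρ π i = ρ' π i) (ht : ∀ i < ℓ, t i = t' i) (π : Var) :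
    ∀ x, ∀ i < ℓ, Function.update ρ π t x i = Function.update ρ' π t' x i := by
  intro x i hi
  by_cases h : x = π
  · subst h; simp [ht i hi]
  · simp [h, hρ x i hi]

/-- The types obtained by extending a block by a path segment of `K` in the variable `π`, together
with the end points of the segment. -/
def projTyping [DecidableEq Var] {Q : Type} (K : Kripke AP) (π : Var)
    (τ : (Var → Trace AP) → ℕ → Q) (ρ : Var → Trace AP) (ℓ : ℕ) : Set (Q × K.S × K.S) :=
  {x | ∃ s : ℕ → K.S, (∀ i < ℓ, K.tr (s i) (s (i + 1))) ∧
    (τ (Function.update ρ π fun n => K.L (s n)) ℓ, s 0, s ℓ) = x}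

theorem IsLocal.projTyping [DecidableEq Var] {Q : Type} {K : Kripke AP} {π : Var}
    {τ : (Var → Trace AP) → ℕ → Q} (hτ : IsLocal τ) : IsLocal (projTyping K π τ) := by
  intro ρ ρ' ℓ h
  have : ∀ t : Trace AP, τ (Function.update ρ π t) ℓ = τ (Function.update ρ' π t) ℓ :=
    fun t => hτ _ _ _ (update_apply_congr h (fun _ _ => rfl) π)
  simp only [_root_.projTyping, this]

/-- Assignments with equal `projTyping` blocks admit extensions by traces of `K` with equal
blocks. -/
theorem SameBlocks.exists_trace [DecidableEq Var] {Q : Type} {K : Kripke AP} {π : Var}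
    {τ : (Var → Trace AP) → ℕ → Q} (hτ : IsLocal τ) {ρ ρ' : Var → Trace AP} {n n' : ℕ → ℕ}
    (hn : StrictMono n) (hn' : StrictMono n') (h0 : n 0 = 0) (h0' : n' 0 = 0)
    (hb : SameBlocks (projTyping K π τ) ρ n ρ' n') {t : Trace AP} (ht : t ∈ K.Traces) :
    ∃ t' ∈ K.Traces, SameBlocks τ (Function.update ρ π t) n (Function.update ρ' π t') n' := by
  obtain ⟨s, hs0, hs, hst⟩ := ht
  obtain rfl : t = fun i => K.L (s i) := funext fun i => funext fun p => hst i p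
  have hex : ∀ k, (τ (Function.update (shiftA ρ (n k)) π fun i => K.L (s (i + n k)))
      (n (k + 1) - n k), s (n k), s (n (k + 1))) ∈
      projTyping K π τ (shiftA ρ (n k)) (n (k + 1) - n k) := by
    intro k
    have := (hn (Nat.lt_succ_self k)).le
    refine ⟨fun i => s (i + n k), fun i _ => ?_, ?_⟩
    · have := hs (i + n k)
      rwa [add_right_comm] at this
    · simp only [zero_add, Nat.sub_add_cancel this]
  replace hex := fun k => (hb k).subset (hex k)
  choose g hg hgt using hex
  simp only [Prod.mk.injEq] at hgt
  obtain ⟨s', hs'⟩ := exists_glue hn' h0' g fun k => by rw [(hgt k).2.2, (hgt (k + 1)).2.1]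
  refine ⟨fun i => K.L (s' i), ⟨s', ?_, ?_, fun _ _ => rfl⟩, fun k => ?_⟩
  · have := hs' 0 0 (Nat.zero_le _)
    rw [h0', add_zero] at this
    rw [this, (hgt 0).2.1, h0]
    exact hs0
  · intro i
    obtain ⟨k, hk, hk'⟩ := exists_block hn' h0' i
    obtain ⟨j, rfl⟩ := Nat.exists_eq_add_of_le hk
    rw [add_assoc, hs' k j (by omega), hs' k (j + 1) (by omega)]
    exact hg k j (by omega)
  · rw [shiftA_update, shiftA_update, ← (hgt k).1]
    refine hτ _ _ _ (update_apply_congr (fun _ _ _ => rfl) (fun i hi => ?_) π)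
    rw [add_comm, hs' k i hi.le]

/-- Quantification over the traces of `K` preserves approximate regularity for every functional that
is monotone up to the error. -/
theorem ApproxRegular.quantify [DecidableEq Var] {K : Kripke AP} {π : Var}
    {f F : (Var → Trace AP) → ℝ} (hf : ApproxRegular f)
    (hF : ∀ ρ ρ' ε,
      (∀ t ∈ K.Traces, ∃ t' ∈ K.Traces,
        f (Function.update ρ π t) ≤ f (Function.update ρ' π t') + ε) →
      (∀ t' ∈ K.Traces, ∃ t ∈ K.Traces,
        f (Function.update ρ π t) ≤ f (Function.update ρ' π t') + ε) →
      0 < ε → F ρ ≤ F ρ' + ε) : ApproxRegular F := by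
  intro ε hε
  obtain ⟨Q, hQ, τ, hl, hr⟩ := hf ε hε
  have := K.finS
  refine ⟨_, inferInstance, projTyping K π τ, hl.projTyping, ?_⟩
  intro ρ ρ' n n' hn hn' h0 h0' hb
  refine hF ρ ρ' ε (fun t ht => ?_) (fun t' ht' => ?_) hε
  · obtain ⟨t', ht', hb'⟩ := hb.exists_trace hl hn hn' h0 h0' ht
    exact ⟨t', ht', hr _ _ n n' hn hn' h0 h0' hb'⟩
  · obtain ⟨t, ht, hblocks⟩ := hb.symm.exists_trace hl hn' hn h0' h0 ht'
    exact ⟨t, ht, hr _ _ n n' hn hn' h0 h0' hblocks.symm⟩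

/-- Suprema of bounded functions are within `ε` if every value of the first is. -/
theorem sSup_image_le_add {α : Type} {T T' : Set α} {a b : α → ℝ} {ε : ℝ} (hε : 0 < ε)
    (hb : ∀ t, b t ∈ Set.Icc (0 : ℝ) 1) (h : ∀ t ∈ T, ∃ t' ∈ T', a t ≤ b t' + ε) :
    sSup (a '' T) ≤ sSup (b '' T') + ε := by
  have h0 : 0 ≤ sSup (b '' T') := Real.sSup_nonneg (by rintro _ ⟨t, -, rfl⟩; exact (hb t).1)
  refine Real.sSup_le ?_ (by linarith)
  rintro _ ⟨t, ht, rfl⟩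
  obtain ⟨t', ht', hle⟩ := h t ht
  have hbdd : BddAbove (b '' T') := ⟨1, by rintro _ ⟨t, -, rfl⟩; exact (hb t).2⟩
  have := le_csSup hbdd (Set.mem_image_of_mem b ht')
  linarith

/-- Infima of bounded functions are within `ε` if every value of the second is. -/
theorem sInf_image_le_add {α : Type} {T T' : Set α} {a b : α → ℝ} {ε : ℝ} (hε : 0 < ε)
    (ha : ∀ t, a t ∈ Set.Icc (0 : ℝ) 1) (hT : T.Nonempty → T'.Nonempty)
    (h : ∀ t' ∈ T', ∃ t ∈ T, a t ≤ b t' + ε) :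
    sInf (a '' T) ≤ sInf (b '' T') + ε := by
  rcases T.eq_empty_or_nonempty with rfl | hne
  · rcases T'.eq_empty_or_nonempty with rfl | ⟨t', ht'⟩
    · simpa using hε.le
    · obtain ⟨t, ht, -⟩ := h t' ht'
      exact ht.elim
  · rw [← sub_le_iff_le_add]
    refine le_csInf ((hT hne).image b) ?_
    rintro _ ⟨t', ht', rfl⟩
    obtain ⟨t, ht, hle⟩ := h t' ht'
    have hbdd : BddBelow (a '' T) := ⟨0, by rintro _ ⟨t, -, rfl⟩; exact (ha t).1⟩
    have := csInf_le hbdd (Set.mem_image_of_mem a ht)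
    linarith

theorem approxRegular_tsem [DecidableEq Var] {η : D → ℕ → ℝ} (hη : ∀ d, IsDiscounting (η d))
    (ψ : TForm AP Var D) (K : Kripke AP) : ApproxRegular (fun ρ => tsem η ψ ρ K.Traces) := by
  induction ψ with
  | qf φ => exact approxRegular_tsemQF hη φ _
  | ex π ψ ih =>
    exact ih.quantify (K := K) (π := π) fun ρ ρ' ε h _ hε =>
      sSup_image_le_add hε (fun t => tsem_mem_Icc hη ψ _ _) h
  | all π ψ ih =>
    exact ih.quantify (K := K) (π := π) fun ρ ρ' ε _ h hε =>
      sInf_image_le_add hε (fun t => tsem_mem_Icc hη ψ _ _) id h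

/-! ### Replacing traces by lassos -/

/-- For every finite colouring of pairs there is an infinite sequence all of whose consecutive pairs
have the same colour. -/
theorem exists_strictMono_colour_eq {Q : Type} [Finite Q] (c : ℕ → ℕ → Q) :
    ∃ (q : Q) (n : ℕ → ℕ), StrictMono n ∧ ∀ k, c (n k) (n (k + 1)) = q := by
  let u : Ultrafilter ℕ := Filter.hyperfilter ℕ
  have lim : ∀ h : ℕ → Q, ∃ q, ∀ᶠ i in (u : Filter ℕ), h i = q := by
    intro h
    obtain ⟨q, hq⟩ := (u.map h).eq_pure_of_finite
    refine ⟨q, ?_⟩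
    have : ({q} : Set Q) ∈ u.map h := by rw [hq]; exact Ultrafilter.mem_pure.2 rfl
    exact this
  choose d hd using fun i => lim (c i)
  obtain ⟨q, hq⟩ := lim d
  have gt : ∀ i, ∀ᶠ j in (u : Filter ℕ), i < j := fun i =>
    Filter.Eventually.filter_mono (Filter.hyperfilter_le_cofinite.trans Nat.cofinite_eq_atTop.le)
      (Filter.eventually_gt_atTop i)
  have step : ∀ i : {i // d i = q}, ∃ j : {j // d j = q}, i.1 < j.1 ∧ c i.1 j.1 = q := by
    rintro ⟨i, hi⟩
    obtain ⟨j, ⟨h1, h2⟩, h3⟩ := ((hq.and (gt i)).and (hd i)).exists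
    exact ⟨⟨j, h1⟩, h2, h3.trans hi⟩
  choose next hlt hcol using step
  obtain ⟨i₀, hi₀⟩ := hq.exists
  let m : ℕ → {i // d i = q} := fun k => Nat.rec ⟨i₀, hi₀⟩ (fun _ i => next i) k
  exact ⟨q, fun k => (m k).1, strictMono_nat_of_lt_succ fun k => hlt (m k), fun k => hcol (m k)⟩

theorem periodic_mul {α : Type} {a : ℕ → α} {N c : ℕ} (h : ∀ n, N ≤ n → a (n + c) = a n) (k : ℕ) :
    ∀ n, N ≤ n → a (n + k * c) = a n := by
  induction k with
  | zero => simp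
  | succ k ih =>
    intro n hn
    rw [Nat.succ_mul, ← add_assoc, h _ (by omega), ih n hn]

/-- Finitely many lassos have a common starting point and period. -/
theorem exists_common_period {V : Set Var} (hV : V.Finite) {ρ : Var → Trace AP}
    (hρ : ∀ π ∈ V, IsLasso (ρ π)) :
    ∃ N c : ℕ, 0 < c ∧ ∀ π ∈ V, ∀ n, N ≤ n → ρ π (n + c) = ρ π n := by
  induction V, hV using Set.Finite.induction_on with
  | empty => exact ⟨0, 1, one_pos, by simp⟩
  | @insert x V _ _ ih =>
    obtain ⟨N, c, hc, h⟩ := ih fun π hπ => hρ π (.inr hπ)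
    obtain ⟨N', c', hc', h'⟩ := hρ x (.inl rfl)
    refine ⟨max N N', c * c', Nat.mul_pos hc hc', ?_⟩
    rintro π (rfl | hπ) n hn
    · exact periodic_mul h' c n ((le_max_right _ _).trans hn)
    · rw [mul_comm]
      exact periodic_mul (h π hπ) c' n ((le_max_left _ _).trans hn)

/-- Repeating forever the segment of `s` between two equal states yields a path. -/
theorem Kripke.lasso_mem {K : Kripke AP} {s : ℕ → K.S} (hs0 : s 0 ∈ K.init)
    (hs : ∀ i, K.tr (s i) (s (i + 1))) {a p : ℕ} (hp : 0 < p) (hsp : s (a + p) = s a) :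
    (fun i => K.L (s (if i < a then i else a + (i - a) % p))) ∈ K.Lassos := by
  refine ⟨⟨fun i => s (if i < a then i else a + (i - a) % p), ?_, fun i => ?_, fun _ _ => rfl⟩,
    a, p, hp, fun n hn => ?_⟩
  · by_cases ha : 0 < a
    · simpa [ha] using hs0
    · obtain rfl : a = 0 := by omega
      simpa using hs0
  · rcases lt_trichotomy (i + 1) a with h | h | h
    · simp only [h, if_true, (by omega : i < a)]
      exact hs i
    · have := hs i
      simp only [(by omega : i < a), h, if_true, lt_irrefl, if_false, Nat.sub_self, Nat.zero_mod,
        add_zero]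
      rwa [h] at this
    · simp only [if_neg (by omega : ¬ i < a), if_neg (by omega : ¬ i + 1 < a),
        (by omega : i + 1 - a = i - a + 1)]
      have hlt := Nat.mod_lt (i - a) hp
      have htr := hs (a + (i - a) % p)
      rcases (Nat.succ_le_of_lt hlt).lt_or_eq with h1 | h1
      · rw [← Nat.mod_add_mod, Nat.mod_eq_of_lt h1]
        exact htr
      · rw [← Nat.mod_add_mod]
        simp only [Nat.succ_eq_add_one] at h1
        rw [h1, Nat.mod_self, add_zero, ← hsp]
        rwa [add_assoc, h1] at htr
  · simp only [if_neg (by omega : ¬ n < a), if_neg (by omega : ¬ n + p < a),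
      (by omega : n + p - a = n - a + p), Nat.add_mod_right]

/-- Over an ultimately periodic assignment, every trace of `K` can be replaced by a lasso of `K`
without changing the block types. -/
theorem exists_lasso_sameBlocks [DecidableEq Var] {Q : Type} [Finite Q] {K : Kripke AP}
    {τ : (Var → Trace AP) → ℕ → Q} (hτ : IsLocal τ) {ρ : Var → Trace AP} {N c : ℕ} (hc : 0 < c)
    (hρ : ∀ π n, N ≤ n → ρ π (n + c) = ρ π n) (π : Var) {t : Trace AP} (ht : t ∈ K.Traces) :
    ∃ t' ∈ K.Lassos, ∃ n n' : ℕ → ℕ, StrictMono n ∧ StrictMono n' ∧ n 0 = 0 ∧ n' 0 = 0 ∧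
      SameBlocks τ (Function.update ρ π t) n (Function.update ρ π t') n' := by
  obtain ⟨s, hs0, hs, hst⟩ := ht
  obtain rfl : t = fun i => K.L (s i) := funext fun i => funext fun p => hst i p
  have := K.finS
  let pos : ℕ → ℕ := fun i => N + (i + 1) * c
  have hpos : StrictMono pos := fun i j hij => by
    have := Nat.mul_lt_mul_of_pos_right (Nat.succ_lt_succ hij) hc
    simp only [pos, Nat.succ_eq_add_one] at this ⊢
    omega
  obtain ⟨⟨q, x⟩, m, hm, hcol⟩ := exists_strictMono_colour_eq fun i j =>
    (τ (shiftA (Function.update ρ π fun i => K.L (s i)) (pos i)) (pos j - pos i), s (pos i))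
  simp only [Prod.mk.injEq] at hcol
  have hmpos : StrictMono fun k => pos (m k) := hpos.comp hm
  have hlt : pos (m 0) < pos (m 1) := hmpos Nat.zero_lt_one
  have ha0 : 0 < pos (m 0) := by
    have := Nat.mul_pos (Nat.succ_pos (m 0)) hc
    simp only [pos, Nat.succ_eq_add_one] at this ⊢
    omega
  have haN : N ≤ pos (m 0) := Nat.le_add_right _ _
  obtain ⟨p, hp⟩ := Nat.exists_eq_add_of_lt hlt
  obtain ⟨r, hr⟩ : ∃ r, p + 1 = r * c := ⟨m 1 - m 0, by
    have := hm Nat.zero_lt_one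
    obtain ⟨e, he⟩ := Nat.exists_eq_add_of_lt this
    have h1 : m 1 - m 0 = e + 1 := by omega
    simp only [pos] at hp
    rw [he] at hp
    rw [h1]
    linarith [hp]⟩
  have hsp : s (pos (m 0) + (p + 1)) = s (pos (m 0)) := by
    rw [← add_assoc, ← hp, (hcol 1).2, (hcol 0).2]
  have hq : τ (shiftA (Function.update ρ π fun i => K.L (s i)) (pos (m 0))) (p + 1) = q := by
    rw [← (hcol 0).1]
    congr 1
    rw [zero_add]
    omega
  refine ⟨_, K.lasso_mem hs0 hs (Nat.succ_pos p) hsp,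
    fun k => Nat.casesOn k 0 fun k => pos (m k),
    fun k => Nat.casesOn k 0 fun k => pos (m 0) + k * (p + 1), ?_, ?_, rfl, rfl, ?_⟩
  · refine strictMono_nat_of_lt_succ fun k => ?_
    cases k with
    | zero => exact ha0
    | succ k => exact hmpos (Nat.lt_succ_self k)
  · refine strictMono_nat_of_lt_succ fun k => ?_
    cases k with
    | zero => simpa using ha0
    | succ k =>
      have := Nat.succ_mul k (p + 1)
      simp only [Nat.succ_eq_add_one] at this ⊢
      omega
  · intro k
    cases k with
    | zero =>
      simp only [zero_mul, add_zero]
      refine hτ.shift (update_apply_congr (fun _ _ _ => rfl) (fun i hi => ?_) π) 0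
      simp only [hi, if_true]
    | succ k =>
      have hlen : pos (m 0) + (k + 1) * (p + 1) - (pos (m 0) + k * (p + 1)) = p + 1 := by
        rw [Nat.succ_mul]; omega
      simp only [hlen]
      rw [(hcol k).1, ← hq, shiftA_update, shiftA_update]
      refine hτ _ _ _ (update_apply_congr (fun x i _ => ?_) (fun i hi => ?_) π)
      · have := periodic_mul (hρ x) (k * r) (i + pos (m 0)) (by omega)
        simp only [shiftA]
        rw [← this, hr, mul_assoc, add_assoc]
      · have h1 : ¬ i + (pos (m 0) + k * (p + 1)) < pos (m 0) := by omega
        have h2 : i + (pos (m 0) + k * (p + 1)) - pos (m 0) = i + k * (p + 1) := by omega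
        simp only [Nat.succ_eq_add_one, h1, if_false, h2, Nat.add_mul_mod_self_right,
          Nat.mod_eq_of_lt hi]
        rw [add_comm]

/-- Over a lasso assignment, every trace of `K` can be replaced by a lasso of `K` with the value of
`ψ` changing by at most `ε`. -/
theorem exists_lasso_tsem_near [DecidableEq Var] {η : D → ℕ → ℝ} (hη : ∀ d, IsDiscounting (η d))
    (ψ : TForm AP Var D) {K : Kripke AP} {π : Var} {ρ : Var → Trace AP}
    (hρ : ∀ x ∈ freeVars ψ \ {π}, IsLasso (ρ x)) {ε : ℝ} (hε : 0 < ε) {t : Trace AP}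
    (ht : t ∈ K.Traces) :
    ∃ t' ∈ K.Lassos,
      tsem η ψ (Function.update ρ π t) K.Traces ≤
        tsem η ψ (Function.update ρ π t') K.Traces + ε ∧
      tsem η ψ (Function.update ρ π t') K.Traces ≤
        tsem η ψ (Function.update ρ π t) K.Traces + ε := by
  classical
  obtain ⟨N, c, hc, hper⟩ := exists_common_period (finite_freeVars ψ).sdiff hρ
  let ρ₀ : Var → Trace AP := fun x => if x ∈ freeVars ψ \ {π} then ρ x else fun _ _ => 0
  have hρ₀ : ∀ x n, N ≤ n → ρ₀ x (n + c) = ρ₀ x n := by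
    intro x n hn
    by_cases hx : x ∈ freeVars ψ \ {π}
    · simp only [ρ₀, if_pos hx, hper x hx n hn]
    · simp only [ρ₀, if_neg hx]
  have hcongr : ∀ t, tsem η ψ (Function.update ρ π t) K.Traces =
      tsem η ψ (Function.update ρ₀ π t) K.Traces := by
    refine fun t => tsem_congr η ψ (fun x hx => ?_) _
    by_cases hxπ : x = π
    · subst hxπ; simp
    · have : x ∈ freeVars ψ \ {π} := ⟨hx, hxπ⟩
      simp only [Function.update_of_ne hxπ, ρ₀, if_pos this]
  obtain ⟨Q, hQ, τ, hl, hr⟩ := approxRegular_tsem hη ψ K ε hε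
  obtain ⟨t', ht', n, n', hn, hn', h0, h0', hb⟩ := exists_lasso_sameBlocks hl hc hρ₀ π ht
  refine ⟨t', ht', ?_⟩
  rw [hcongr, hcongr]
  exact ⟨hr _ _ n n' hn hn' h0 h0' hb, hr _ _ n' n hn' hn h0' h0 hb.symm⟩

/-- Corollary: traces = lassos. For every HyperLTL_temp formula `ψ`,
every weighted Kripke structure `K`, and every lasso assignment `Π` (mapping each free
variable of `ψ` to a lasso of `K`), `⟦ψ⟧_Π^{𝕋(K)} = ⟦ψ⟧_Π^{𝕃(K)}`. In particular the two
satisfaction values coincide for closed formulas. -/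
theorem stmt_7 {AP Var D : Type} [DecidableEq Var] [Finite D]
    (η : D → ℕ → ℝ) (hη : ∀ d, IsDiscounting (η d))
    (ψ : TForm AP Var D) (K : Kripke AP)
    (ρ : Var → Trace AP) (hρ : ∀ π ∈ freeVars ψ, ρ π ∈ K.Lassos) :
    tsem η ψ ρ K.Traces = tsem η ψ ρ K.Lassos := by
  have upd : ∀ {ψ : TForm AP Var D} {π : Var} {ρ : Var → Trace AP},
      (∀ x ∈ freeVars ψ \ {π}, ρ x ∈ K.Lassos) → ∀ t ∈ K.Lassos,
        ∀ x ∈ freeVars ψ, Function.update ρ π t x ∈ K.Lassos := by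
    intro ψ π ρ h t ht x hx
    by_cases hxπ : x = π
    · subst hxπ; simpa using ht
    · simpa [hxπ] using h x ⟨hx, hxπ⟩
  induction ψ generalizing ρ with
  | qf φ => exact tsemQF_congr η φ (fun _ _ => rfl) _ _
  | ex π ψ ih =>
    have near := fun ε (hε : 0 < ε) t => exists_lasso_tsem_near hη ψ (K := K) (π := π)
      (fun x hx => (hρ x hx).2) hε (t := t)
    refine le_antisymm ?_ ?_ <;> refine le_of_forall_pos_le_add fun ε hε =>
      sSup_image_le_add hε (fun t => tsem_mem_Icc hη ψ _ _) fun t ht => ?_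
    · obtain ⟨t', ht', h, -⟩ := near ε hε t ht
      exact ⟨t', ht', by rwa [← ih _ (upd hρ t' ht')]⟩
    · exact ⟨t, ht.1, by rw [ih _ (upd hρ t ht)]; linarith⟩
  | all π ψ ih =>
    have near := fun ε (hε : 0 < ε) t => exists_lasso_tsem_near hη ψ (K := K) (π := π)
      (fun x hx => (hρ x hx).2) hε (t := t)
    have hne : K.Traces.Nonempty → K.Lassos.Nonempty := fun ⟨t, ht⟩ =>
      let ⟨t', ht', _⟩ := near 1 one_pos t ht
      ⟨t', ht'⟩
    refine le_antisymm ?_ ?_ <;> refine le_of_forall_pos_le_add fun ε hε =>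
      sInf_image_le_add hε (fun t => tsem_mem_Icc hη ψ _ _) ?_ fun t ht => ?_
    · exact hne
    · exact ⟨t, ht.1, by rw [ih _ (upd hρ t ht)]; linarith⟩
    · exact fun ⟨t, ht⟩ => ⟨t, ht.1⟩
    · obtain ⟨t', ht', -, h⟩ := near ε hε t ht
      exact ⟨t', ht', by rwa [← ih _ (upd hρ t' ht')]⟩

end
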